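/- For all z, w ∈ ℂ with z ≠ z₁, w ≠ z₁ and conj(z) ≠ w, one has (c₁·Z_z(w) − conj(Z₁(z))·Z₁(w)) / (c₁·(w − z₁)·(conj(z) − conj(z₁))) = (conj(𝓔(z))·𝓔(w) − conj(𝓕(z))·𝓕(w)) / (i·(conj(z) − w)), where Z_z(w) := (conj(E(z))·E(w) − conj(F(z))·F(w))/(i·(conj(z) − w)). -/

import Mathlib

/-!
Write `[u, v] = conj u₁ * v₁ - conj u₂ * v₂`, `G = (E, F)` and `H = (𝓔, 𝓕)`, so that
`[G z, G w] = I * (conj z - w) * Z_z w` and `(w - z₁) • H w = G w - (Z₁ w / c₁) • G z₁`. When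
`[(z - z₁) • H z, (w - z₁) • H w]` is expanded, the three terms involving `G z₁` are all multiples
of `-I * conj (Z₁ z) * Z₁ w / c₁`, with coefficients `conj z - z₁`, `conj z₁ - w` and
`-(conj z₁ - z₁)`. These sum to `conj z - w`, the very factor carried by `[G z, G w]`, so dividing
it out leaves `Z_z w - conj (Z₁ z) * Z₁ w / c₁`.
-/

open scoped ComplexConjugate

section KernelSection

variable {𝕜 V : Type*} [CommRing 𝕜] [StarRing 𝕜] [AddCommGroup V] [Module 𝕜 V]
  {B : V →ₗ⋆[𝕜] V →ₗ[𝕜] 𝕜} {ι a : 𝕜} {G : 𝕜 → V} {Z : 𝕜 → 𝕜}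

/-- `Z` is the section at `a` of the kernel `B (G z) (G w) / (ι * (conj z - w))`; for `𝕜 = ℂ`,
`ι = I` and a suitable `B` this is the de Branges reproducing kernel at `a`. The denominator is
multiplied out so that the condition is meaningful at `w = conj a`, where it forces the numerator
to vanish and leaves `Z` free. -/
def IsKernelSection (B : V →ₗ⋆[𝕜] V →ₗ[𝕜] 𝕜) (ι : 𝕜) (G : 𝕜 → V) (a : 𝕜) (Z : 𝕜 → 𝕜) : Prop :=
  ∀ w, B (G a) (G w) = ι * (conj a - w) * Z w

namespace IsKernelSection

theorem apply_right (hZ : IsKernelSection B ι G a Z) (hB : B.IsSymm) (hι : conj ι = -ι) (z : 𝕜) :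
    B (G z) (G a) = ι * (conj z - a) * conj (Z z) := by
  rw [← hB.eq, hZ z]
  simp only [map_mul, map_sub, starRingEnd_self_apply, hι]
  ring

end IsKernelSection

end KernelSection

section OneZeroQuotient

variable {𝕜 V : Type*} [Field 𝕜] [StarRing 𝕜] [AddCommGroup V] [Module 𝕜 V]
  {B : V →ₗ⋆[𝕜] V →ₗ[𝕜] 𝕜} {ι a : 𝕜} {G H : 𝕜 → V} {Z : 𝕜 → 𝕜}

namespace IsKernelSection

theorem of_eq_div (hι : ι ≠ 0) (ha : B (G a) (G (conj a)) = 0)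
    (hZ : ∀ w, w ≠ conj a → Z w = B (G a) (G w) / (ι * (conj a - w))) :
    IsKernelSection B ι G a Z := by
  intro w
  obtain rfl | hw := eq_or_ne w (conj a)
  · simp [ha]
  · rw [hZ w hw, mul_div_cancel₀ _ (mul_ne_zero hι (sub_ne_zero.mpr hw.symm))]

theorem apply_sub_smul_sub_smul (hZ : IsKernelSection B ι G a Z) (hB : B.IsSymm)
    (hι : conj ι = -ι) (hreal : conj (Z a) = Z a) (ha : Z a ≠ 0) (z w : 𝕜) :
    B (G z - (Z z / Z a) • G a) (G w - (Z w / Z a) • G a) =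
      B (G z) (G w) - ι * (conj z - w) * (conj (Z z) * Z w / Z a) := by
  calc
    _ = B (G z) (G w) - Z w / Z a * B (G z) (G a) - conj (Z z) / Z a * B (G a) (G w) +
          conj (Z z) / Z a * (Z w / Z a) * B (G a) (G a) := by
      simp only [map_sub, map_smulₛₗ, LinearMap.sub_apply, LinearMap.smul_apply, smul_eq_mul,
        map_div₀, hreal, RingHom.id_apply]
      ring
    _ = B (G z) (G w) -
          ι * ((conj z - a) + (conj a - w) - (conj a - a)) * (conj (Z z) * Z w / Z a) := by
      rw [hZ.apply_right hB hι z, hZ w, hZ a]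
      field_simp
      ring
    _ = B (G z) (G w) - ι * (conj z - w) * (conj (Z z) * Z w / Z a) := by ring

theorem sub_mul_sub_mul_apply (hZ : IsKernelSection B ι G a Z) (hB : B.IsSymm)
    (hι : conj ι = -ι) (hreal : conj (Z a) = Z a) (ha : Z a ≠ 0)
    (hH : ∀ w, (w - a) • H w = G w - (Z w / Z a) • G a) (z w : 𝕜) :
    (conj z - conj a) * (w - a) * B (H z) (H w) =
      B (G z) (G w) - ι * (conj z - w) * (conj (Z z) * Z w / Z a) := by
  rw [← hZ.apply_sub_smul_sub_smul hB hι hreal ha, ← hH, ← hH]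
  simp only [map_smulₛₗ, LinearMap.smul_apply, smul_eq_mul, map_sub, RingHom.id_apply]
  ring

end IsKernelSection

theorem reproducing_kernel_one_zero_general (hB : B.IsSymm) (hι : conj ι = -ι) (hι₀ : ι ≠ 0)
    (hZ : IsKernelSection B ι G a Z) (hreal : conj (Z a) = Z a) (ha : Z a ≠ 0)
    (hH : ∀ w, (w - a) • H w = G w - (Z w / Z a) • G a)
    {z w : 𝕜} (hz : z ≠ a) (hw : w ≠ a) (hzw : conj z ≠ w) :
    (Z a * (B (G z) (G w) / (ι * (conj z - w))) - conj (Z z) * Z w) /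
        (Z a * (w - a) * (conj z - conj a)) =
      B (H z) (H w) / (ι * (conj z - w)) := by
  have hzw₀ : conj z - w ≠ 0 := sub_ne_zero.mpr hzw
  have hw₀ : w - a ≠ 0 := sub_ne_zero.mpr hw
  have hz₀ : conj z - conj a ≠ 0 := sub_ne_zero.mpr ((starRingEnd 𝕜).injective.ne hz)
  have key := hZ.sub_mul_sub_mul_apply hB hι hreal ha hH z w
  field_simp at key ⊢
  linear_combination -key

end OneZeroQuotient

section HyperbolicForm

variable {𝕜 : Type*} [CommRing 𝕜] [StarRing 𝕜]

variable (𝕜) in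
/-- The Hermitian form `conj u₁ * v₁ - conj u₂ * v₂` on `𝕜²`, conjugate-linear in its first
argument. On pairs `(E z, F z)` it gives the numerator of the de Branges kernel. -/
def hyperbolicForm : 𝕜 × 𝕜 →ₗ⋆[𝕜] 𝕜 × 𝕜 →ₗ[𝕜] 𝕜 :=
  LinearMap.mk₂'ₛₗ (starRingEnd 𝕜) (RingHom.id 𝕜) (fun u v ↦ conj u.1 * v.1 - conj u.2 * v.2)
    (fun _ _ _ ↦ by simp only [Prod.fst_add, Prod.snd_add, map_add]; ring)
    (fun _ _ _ ↦ by simp only [Prod.smul_fst, Prod.smul_snd, smul_eq_mul, map_mul]; ring)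
    (fun _ _ _ ↦ by simp only [Prod.fst_add, Prod.snd_add]; ring)
    (fun _ _ _ ↦ by simp only [Prod.smul_fst, Prod.smul_snd, smul_eq_mul, RingHom.id_apply]; ring)

theorem hyperbolicForm_apply (u v : 𝕜 × 𝕜) :
    hyperbolicForm 𝕜 u v = conj u.1 * v.1 - conj u.2 * v.2 :=
  rfl

theorem hyperbolicForm_isSymm : (hyperbolicForm 𝕜).IsSymm where
  eq u v := by
    simp only [hyperbolicForm_apply, map_sub, map_mul, starRingEnd_self_apply, mul_comm]

theorem hyperbolicForm_apply_conj_eq_zero {E F : 𝕜 → 𝕜} (hF : ∀ z, F z = conj (E (conj z)))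
    (z : 𝕜) : hyperbolicForm 𝕜 (E z, F z) (E (conj z), F (conj z)) = 0 := by
  simp only [hyperbolicForm_apply, hF, starRingEnd_self_apply]
  ring

end HyperbolicForm

/-- In the one-trivial-zero situation (see context), with `c₁ = Z₁(z₁)` and
`Z_z(w) := (conj(E z)·E w − conj(F z)·F w)/(i·(conj z − w))`, for all `z, w ∈ ℂ` with
`z ≠ z₁`, `w ≠ z₁` and `conj z ≠ w`:
`(c₁·Z_z(w) − conj(Z₁ z)·Z₁ w)/(c₁·(w − z₁)·(conj z − conj z₁))
  = (conj(𝓔 z)·𝓔 w − conj(𝓕 z)·𝓕 w)/(i·(conj z − w))`. -/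
theorem reproducing_kernel_one_zero
    (E F Z₁ 𝓔 𝓕 : ℂ → ℂ) (z₁ : ℂ)
    (hE : Differentiable ℂ E)
    (hF : ∀ z, F z = starRingEnd ℂ (E (starRingEnd ℂ z)))
    (hZ₁diff : Differentiable ℂ Z₁)
    (hZ₁ : ∀ w, w ≠ starRingEnd ℂ z₁ →
      Z₁ w = (starRingEnd ℂ (E z₁) * E w - starRingEnd ℂ (F z₁) * F w) /
        (Complex.I * (starRingEnd ℂ z₁ - w)))
    (hc₁real : (Z₁ z₁).im = 0) (hc₁ne : Z₁ z₁ ≠ 0)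
    (h𝓔diff : Differentiable ℂ 𝓔) (h𝓕diff : Differentiable ℂ 𝓕)
    (h𝓔 : ∀ w, (w - z₁) * 𝓔 w = E w - E z₁ * Z₁ w / Z₁ z₁)
    (h𝓕 : ∀ w, (w - z₁) * 𝓕 w = F w - F z₁ * Z₁ w / Z₁ z₁) :
    ∀ z w : ℂ, z ≠ z₁ → w ≠ z₁ → starRingEnd ℂ z ≠ w →
      (Z₁ z₁ * ((starRingEnd ℂ (E z) * E w - starRingEnd ℂ (F z) * F w) /
          (Complex.I * (starRingEnd ℂ z - w))) -
         starRingEnd ℂ (Z₁ z) * Z₁ w) /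
        (Z₁ z₁ * (w - z₁) * (starRingEnd ℂ z - starRingEnd ℂ z₁)) =
      (starRingEnd ℂ (𝓔 z) * 𝓔 w - starRingEnd ℂ (𝓕 z) * 𝓕 w) /
        (Complex.I * (starRingEnd ℂ z - w)) := by
  have hZ : IsKernelSection (hyperbolicForm ℂ) Complex.I (fun u ↦ (E u, F u)) z₁ Z₁ :=
    .of_eq_div Complex.I_ne_zero (hyperbolicForm_apply_conj_eq_zero hF z₁) hZ₁
  have hH (u : ℂ) :
      (u - z₁) • (𝓔 u, 𝓕 u) = (E u, F u) - (Z₁ u / Z₁ z₁) • (E z₁, F z₁) := by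
    ext <;> simp only [Prod.smul_mk, Prod.mk_sub_mk, smul_eq_mul, h𝓔, h𝓕] <;> ring
  intro z w
  exact reproducing_kernel_one_zero_general (H := fun u ↦ (𝓔 u, 𝓕 u)) hyperbolicForm_isSymm
    Complex.conj_I Complex.I_ne_zero hZ (Complex.conj_eq_iff_im.mpr hc₁real) hc₁ne hH
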